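/- arXiv:2202.04454 — 5 statements merged into one kernel-verified Lean document; each statement's English description precedes it below -/
import Mathlib

section
/- (Lemma 2, '△' identity.) Let W be a binary-input discrete memoryless channel with finite output alphabet 𝒴, let n ≥ 4 be even, let A be an (n/2)×(n/2) matrix over 𝔽₂, let 𝓘 ⊆ {1,…,n−1} satisfy the separation condition, and set Gₙ := P_𝓘·(A ⊗ G₂). Suppose 1 ≤ i ≤ n/2−1, 2i ∉ 𝓘 and 2(i+1) ∉ 𝓘. Then for all y ∈ 𝒴ⁿ and all u₁,…,u_{2i+2} ∈ 𝔽₂: V_{2i+1}^{Gₙ}(y, (u₁,…,u_{2i}) | u_{2i+1}, u_{2i+2}) = (1/4)·V_i^A(y_odd, (ũ₁,ũ₃,…,ũ_{2i−3}) | û_{2i−1}+u_{2i}, u_{2i+1}+u_{2i+2})·V_i^A(y_even, (ũ₂,ũ₄,…,ũ_{2i−2}) | u_{2i}, u_{2i+2}), where û_{2i−1} = u_{2i−2} if 2(i−1) ∈ 𝓘 and û_{2i−1} = u_{2i−1} otherwise. This is the identity V_{2i+1}^{Gₙ} = (V_i^A)^△, which covers Cases iii) and v) of Lemma 2. -/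
/-!
Conditioning on two bits of the uniform message has probability `1/4` in every model, so each
adjacent-bits-channel is `4` times the joint probability that the output is `y` and a message
prefix, now including the two conditioning bits, takes prescribed values
(`adjChannel_eq_prefixProb`).

These prefix probabilities factor (`prefixProb_split`). The map `u ↦ û = u P_𝓘 ↦ (ũ_odd, ũ_even)` is
a bijection of messages, and the codeword `u P_𝓘 (A ⊗ G₂)` restricted to the odd (even) positions is
`ũ_odd A` (`ũ_even A`), so the likelihood is the product of those of two copies of the length-`m`
model. When `2k ∉ 𝓘`, the permutation preserves the first `2k` coordinates, so fixing them fixes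
exactly the first `k` entries of `ũ_odd` and `ũ_even`. With `k = i + 1` the factors of `4` give
`4 = (1/4) · 4 · 4`, and `2i, 2i + 2 ∉ 𝓘` identifies `û` on the last two blocks of the prefix.
-/

open scoped Classical

/-- Probability of an event `E` under a pmf `P` on a finite space. -/
noncomputable def prob {Ω : Type*} [Fintype Ω] (P : Ω → ℝ) (E : Ω → Prop) : ℝ :=
  ∑ ω : Ω, if E ω then P ω else 0

/-- The polar-coding model `μ_G`: the joint pmf on message/output pairs, where the message
`u` is uniform on `𝔽₂ⁿ`, the codeword is `uG`, and each coordinate is sent through the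
binary-input channel `W` (here `W x y` denotes the transition probability `W(y|x)`). -/
noncomputable def polarPMF {𝒴 : Type*} [Fintype 𝒴] {n : ℕ}
    (W : ZMod 2 → 𝒴 → ℝ) (G : Matrix (Fin n) (Fin n) (ZMod 2)) :
    (Fin n → ZMod 2) × (Fin n → 𝒴) → ℝ :=
  fun p => (1 / 2 : ℝ) ^ n * ∏ j, W (Matrix.vecMul p.1 G j) (p.2 j)

/-- The adjacent-bits-channel `V_i^M` of the model `μ_M` (0-based index `i`):
`V_i^M(y, (u_0, …, u_{i-1}) | a, b) = P(Y = y, U_0 = u_0, …, U_{i-1} = u_{i-1} | U_i = a, U_{i+1} = b)`.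
Only the values `upre j` for `j < i` are relevant. -/
noncomputable def adjChannel {𝒴 : Type*} [Fintype 𝒴] {m : ℕ}
    (W : ZMod 2 → 𝒴 → ℝ) (M : Matrix (Fin m) (Fin m) (ZMod 2))
    (i : ℕ) (y : Fin m → 𝒴) (upre : ℕ → ZMod 2) (a b : ZMod 2) : ℝ :=
  prob (polarPMF W M)
      (fun p => p.2 = y ∧ ∀ j : Fin m,
        (j.val < i → p.1 j = upre j.val) ∧ (j.val = i → p.1 j = a) ∧
          (j.val = i + 1 → p.1 j = b)) /
    prob (polarPMF W M)
      (fun p => ∀ j : Fin m, (j.val = i → p.1 j = a) ∧ (j.val = i + 1 → p.1 j = b))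

/-- The 2×2 Arıkan kernel `G₂ = [[1,0],[1,1]]` over `𝔽₂`. -/
def G2 : Matrix (Fin 2) (Fin 2) (ZMod 2) := !![1, 0; 1, 1]

/-- The Kronecker product `A ⊗ G₂` under the interleaved index identification
`(j, k) ↦ 2j + k` (0-based): `(A ⊗ G₂)(r, c) = A(r/2, c/2) · G₂(r%2, c%2)`. -/
def interKron {m : ℕ} (A : Matrix (Fin m) (Fin m) (ZMod 2)) :
    Matrix (Fin (2 * m)) (Fin (2 * m)) (ZMod 2) :=
  fun r c =>
    A ⟨r.val / 2, by have := r.isLt; omega⟩ ⟨c.val / 2, by have := c.isLt; omega⟩ *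
      G2 ⟨r.val % 2, by omega⟩ ⟨c.val % 2, by omega⟩

/-- The (0-based) index map of the permutation `P_𝓘`: for each (1-based, paper) index
`i ∈ 𝓘`, the coordinates `i − 1` and `i` (0-based) are exchanged (so that
`(u P_𝓘)_j = u_{swapPerm 𝓘 j}` under the separation condition). -/
def swapPerm (I : Finset ℕ) (j : ℕ) : ℕ :=
  if j + 1 ∈ I then j + 1 else if j ∈ I then j - 1 else j

/-- The `n×n` permutation matrix `P_𝓘` over `𝔽₂`. -/
def permMatrix (I : Finset ℕ) (n : ℕ) : Matrix (Fin n) (Fin n) (ZMod 2) :=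
  fun r c => if swapPerm I r.val = c.val then 1 else 0

/-! ### Even and odd coordinates -/

/-- The 0-based index `2t`, an odd position in 1-based counting. -/
def evenIdx {m : ℕ} (t : Fin m) : Fin (2 * m) := ⟨2 * t.val, by have := t.isLt; omega⟩

/-- The 0-based index `2t + 1`, an even position in 1-based counting. -/
def oddIdx {m : ℕ} (t : Fin m) : Fin (2 * m) := ⟨2 * t.val + 1, by have := t.isLt; omega⟩

lemma prod_fin_two_mul {R : Type*} [CommMonoid R] {m : ℕ} (f : Fin (2 * m) → R) :
    ∏ j, f j = ∏ t : Fin m, (f (evenIdx t) * f (oddIdx t)) := by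
  rw [← (finProdFinEquiv.trans (finCongr (mul_comm m 2))).prod_comp, Fintype.prod_prod_type]
  refine Finset.prod_congr rfl fun t _ => ?_
  rw [Fin.prod_univ_two]
  congr 2 <;> ext <;> simp [finProdFinEquiv, evenIdx, oddIdx, add_comm]

lemma sum_fin_two_mul {R : Type*} [AddCommMonoid R] {m : ℕ} (f : Fin (2 * m) → R) :
    ∑ j, f j = ∑ t : Fin m, (f (evenIdx t) + f (oddIdx t)) := by
  rw [← (finProdFinEquiv.trans (finCongr (mul_comm m 2))).sum_comp, Fintype.sum_prod_type]
  refine Finset.sum_congr rfl fun t _ => ?_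
  rw [Fin.sum_univ_two]
  congr 2 <;> ext <;> simp [finProdFinEquiv, evenIdx, oddIdx, add_comm]

/-! ### Adjacent-bits-channels as prefix probabilities -/

/-- The joint probability `P(Y = y, U_0 = v_0, …, U_{k-1} = v_{k-1})` in the model `μ_M`. -/
noncomputable def prefixProb {𝒴 : Type*} {m : ℕ}
    (W : ZMod 2 → 𝒴 → ℝ) (M : Matrix (Fin m) (Fin m) (ZMod 2))
    (k : ℕ) (y : Fin m → 𝒴) (v : ℕ → ZMod 2) : ℝ :=
  ∑ u : Fin m → ZMod 2, if ∀ j : Fin m, j.val < k → u j = v j.val then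
    (1 / 2 : ℝ) ^ m * ∏ j, W (Matrix.vecMul u M j) (y j) else 0

/-- The message is uniform whatever `M` is, so two distinct message bits take prescribed values
with probability `1/4`. -/
lemma prob_adjacent_bits {𝒴 : Type*} [Fintype 𝒴]
    (W : ZMod 2 → 𝒴 → ℝ) (hW1 : ∀ x, ∑ y, W x y = 1) {m : ℕ}
    (M : Matrix (Fin m) (Fin m) (ZMod 2)) (i : ℕ) (hi : i + 1 < m) (a b : ZMod 2) :
    prob (polarPMF W M)
      (fun p => ∀ j : Fin m, (j.val = i → p.1 j = a) ∧ (j.val = i + 1 → p.1 j = b)) = 1 / 4 := by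
  have houtput : ∀ x : Fin m → ZMod 2, ∑ y : Fin m → 𝒴, ∏ j, W (x j) (y j) = 1 := by
    intro x
    rw [← Fintype.prod_sum]
    simp [hW1]
  unfold prob polarPMF
  rw [Fintype.sum_prod_type]
  have hmarginal : ∀ u : Fin m → ZMod 2, (∑ y : Fin m → 𝒴,
      if ∀ j : Fin m, (j.val = i → u j = a) ∧ (j.val = i + 1 → u j = b) then
        (1 / 2 : ℝ) ^ m * ∏ j, W (Matrix.vecMul u M j) (y j) else 0) =
      ∏ j : Fin m, if (j.val = i → u j = a) ∧ (j.val = i + 1 → u j = b)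
        then (1 / 2 : ℝ) else 0 := by
    intro u
    split_ifs with h
    · rw [← Finset.mul_sum, houtput, Finset.prod_congr rfl (fun j _ => if_pos (h j))]
      simp
    · push Not at h
      obtain ⟨j, hj⟩ := h
      rw [Finset.prod_eq_zero (Finset.mem_univ j)]
      · simp
      · rw [if_neg]
        rintro ⟨h1, h2⟩
        exact hj h1 |>.elim fun h3 h4 => h4 (h2 h3)
  -- `convert` reconciles the decidability instances of the two `if`s.
  refine (Finset.sum_congr rfl fun u _ => by convert hmarginal u).trans ?_
  rw [← Fintype.prod_sum (fun (j : Fin m) (x : ZMod 2) =>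
    if (j.val = i → x = a) ∧ (j.val = i + 1 → x = b) then (1 / 2 : ℝ) else 0)]
  have hfactor : ∀ j : Fin m, (∑ x : ZMod 2,
      if (j.val = i → x = a) ∧ (j.val = i + 1 → x = b) then (1 / 2 : ℝ) else 0) =
      (if j = ⟨i, by omega⟩ then 1 / 2 else 1) * (if j = ⟨i + 1, hi⟩ then 1 / 2 else 1) := by
    intro j
    simp only [Fin.ext_iff]
    by_cases h1 : j.val = i
    · simp [h1]
    · by_cases h2 : j.val = i + 1
      · simp [h2]
      · simp [h1, h2]
  rw [Finset.prod_congr rfl fun j _ => hfactor j, Finset.prod_mul_distrib]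
  simp only [Finset.prod_ite_eq', Finset.mem_univ, if_true]
  norm_num

lemma adjChannel_eq_prefixProb {𝒴 : Type*} [Fintype 𝒴]
    (W : ZMod 2 → 𝒴 → ℝ) (hW1 : ∀ x, ∑ y, W x y = 1) {m : ℕ}
    (M : Matrix (Fin m) (Fin m) (ZMod 2)) (i : ℕ) (hi : i + 1 < m) (y : Fin m → 𝒴)
    (upre v : ℕ → ZMod 2) (a b : ZMod 2) (hpre : ∀ j < i, upre j = v j)
    (ha : a = v i) (hb : b = v (i + 1)) :
    adjChannel W M i y upre a b = 4 * prefixProb W M (i + 2) y v := by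
  unfold adjChannel
  rw [prob_adjacent_bits W hW1 M i hi]
  have hnum : prob (polarPMF W M)
      (fun p => p.2 = y ∧ ∀ j : Fin m,
        (j.val < i → p.1 j = upre j.val) ∧ (j.val = i → p.1 j = a) ∧
          (j.val = i + 1 → p.1 j = b)) = prefixProb W M (i + 2) y v := by
    unfold prob prefixProb polarPMF
    rw [Fintype.sum_prod_type]
    refine Finset.sum_congr rfl fun u _ => ?_
    rw [Finset.sum_eq_single y]
    · have hiff : (∀ j : Fin m,
        (j.val < i → u j = upre j.val) ∧ (j.val = i → u j = a) ∧
          (j.val = i + 1 → u j = b)) ↔ ∀ j : Fin m, j.val < i + 2 → u j = v j.val := by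
        refine forall_congr' fun j => ?_
        constructor
        · rintro ⟨h1, h2, h3⟩ hj
          rcases Nat.lt_trichotomy j.val i with h | h | h
          · rw [h1 h, hpre _ h]
          · rw [h2 h, ha, h]
          · have h' : j.val = i + 1 := by omega
            rw [h3 h', hb, h']
        · intro h
          refine ⟨fun hj => ?_, fun hj => ?_, fun hj => ?_⟩
          · rw [h (by omega), hpre _ hj]
          · rw [h (by omega), ha, hj]
          · rw [h (by omega), hb, hj]
      simp only [true_and, hiff]
    · intro z _ hz
      simp [hz]
    · simp
  rw [hnum]
  ring

/-! ### The permutation and the Kronecker step -/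

/-- The transpositions are disjoint because the elements of `I` are even. -/
lemma swapPerm_swapPerm (I : Finset ℕ) (hIpos : ∀ x ∈ I, 1 ≤ x) (hIeven : ∀ x ∈ I, 2 ∣ x)
    (j : ℕ) : swapPerm I (swapPerm I j) = j := by
  have h0 := hIeven j
  have h1 := hIeven (j + 1)
  have h2 := hIeven (j + 1 + 1)
  have h3 := hIpos j
  have h4 := hIeven (j - 1)
  unfold swapPerm
  by_cases hj1 : j + 1 ∈ I
  · have := h1 hj1
    have hn : j + 1 + 1 ∉ I := fun h => by have := h2 h; omega
    simp [hj1, hn]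
  · by_cases hj : j ∈ I
    · have := h3 hj
      have hs : j - 1 + 1 = j := by omega
      simp [hj1, hj, hs]
    · simp [hj1, hj]

lemma swapPerm_lt (I : Finset ℕ) (k : ℕ)
    (hk : 2 * k ∉ I) (j : ℕ) (hj : j < 2 * k) : swapPerm I j < 2 * k := by
  unfold swapPerm
  split_ifs with h1 h2
  · have hne : j + 1 ≠ 2 * k := fun h => hk (h ▸ h1)
    omega
  · omega
  · exact hj

/-- `swapPerm I` as a permutation of the `2m` coordinates. -/
def swapEquiv (I : Finset ℕ) (hIpos : ∀ x ∈ I, 1 ≤ x) (hIeven : ∀ x ∈ I, 2 ∣ x) (m : ℕ)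
    (hm : 2 * m ∉ I) : Equiv.Perm (Fin (2 * m)) where
  toFun j := ⟨swapPerm I j.val, swapPerm_lt I m hm j.val j.isLt⟩
  invFun j := ⟨swapPerm I j.val, swapPerm_lt I m hm j.val j.isLt⟩
  left_inv j := by ext; simp [swapPerm_swapPerm I hIpos hIeven]
  right_inv j := by ext; simp [swapPerm_swapPerm I hIpos hIeven]

/-- The bijection `û ↦ (ũ_odd, ũ_even)` of the `G₂` step: with 0-based indices its components are
`t ↦ û_{2t} + û_{2t+1}` and `t ↦ û_{2t+1}`. -/
def splitEquiv (m : ℕ) :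
    (Fin (2 * m) → ZMod 2) ≃ (Fin m → ZMod 2) × (Fin m → ZMod 2) where
  toFun w := (fun t => w (evenIdx t) + w (oddIdx t), fun t => w (oddIdx t))
  invFun p j := if j.val % 2 = 0
    then p.1 ⟨j.val / 2, by have := j.isLt; omega⟩ + p.2 ⟨j.val / 2, by have := j.isLt; omega⟩
    else p.2 ⟨j.val / 2, by have := j.isLt; omega⟩
  left_inv w := by
    funext j
    dsimp only
    split_ifs with h
    · rw [add_assoc, CharTwo.add_self_eq_zero, add_zero]
      congr 1; ext; simp only [evenIdx]; omega
    · congr 1; ext; simp only [oddIdx]; omega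
  right_inv p := by
    have hdiv : ∀ t : ℕ, (2 * t + 1) / 2 = t := fun t => by omega
    have hmod : ∀ t : ℕ, (2 * t + 1) % 2 = 1 := fun t => by omega
    ext t <;> simp [evenIdx, oddIdx, hdiv, hmod, add_assoc, CharTwo.add_self_eq_zero]

lemma vecMul_permMatrix (I : Finset ℕ) (hIpos : ∀ x ∈ I, 1 ≤ x) (hIeven : ∀ x ∈ I, 2 ∣ x)
    (m : ℕ) (hm : 2 * m ∉ I) (u : Fin (2 * m) → ZMod 2) :
    Matrix.vecMul u (permMatrix I (2 * m)) = u ∘ swapEquiv I hIpos hIeven m hm := by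
  funext c
  simp only [Matrix.vecMul, dotProduct, permMatrix, Function.comp]
  rw [Finset.sum_eq_single (swapEquiv I hIpos hIeven m hm c)]
  · simp [swapEquiv, swapPerm_swapPerm I hIpos hIeven]
  · intro r _ hr
    rw [if_neg, mul_zero]
    intro h
    apply hr
    ext
    simp [swapEquiv, ← h, swapPerm_swapPerm I hIpos hIeven]
  · simp

lemma vecMul_interKron_even {m : ℕ} (A : Matrix (Fin m) (Fin m) (ZMod 2))
    (w : Fin (2 * m) → ZMod 2) (t : Fin m) :
    Matrix.vecMul w (interKron A) (evenIdx t) = Matrix.vecMul (splitEquiv m w).1 A t := by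
  have hdiv : ∀ t : ℕ, (2 * t + 1) / 2 = t := fun t => by omega
  have hmod : ∀ t : ℕ, (2 * t + 1) % 2 = 1 := fun t => by omega
  simp only [Matrix.vecMul, dotProduct, sum_fin_two_mul]
  refine Finset.sum_congr rfl fun s _ => ?_
  simp [interKron, splitEquiv, evenIdx, oddIdx, G2, hdiv, hmod, add_mul]

lemma vecMul_interKron_odd {m : ℕ} (A : Matrix (Fin m) (Fin m) (ZMod 2))
    (w : Fin (2 * m) → ZMod 2) (t : Fin m) :
    Matrix.vecMul w (interKron A) (oddIdx t) = Matrix.vecMul (splitEquiv m w).2 A t := by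
  have hdiv : ∀ t : ℕ, (2 * t + 1) / 2 = t := fun t => by omega
  have hmod : ∀ t : ℕ, (2 * t + 1) % 2 = 1 := fun t => by omega
  simp only [Matrix.vecMul, dotProduct, sum_fin_two_mul]
  refine Finset.sum_congr rfl fun s _ => ?_
  simp [interKron, splitEquiv, evenIdx, oddIdx, G2, hdiv, hmod]

/-! ### Factorization of prefix probabilities -/

/-- Fixing the first `2k` message bits of `P_𝓘 (A ⊗ G₂)` amounts to fixing the first `k` bits of
each of the two independent copies of the length-`m` model, provided `P_𝓘` does not exchange
coordinates across position `2k`. -/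
lemma prefixProb_split {𝒴 : Type*} (W : ZMod 2 → 𝒴 → ℝ) {m : ℕ}
    (A : Matrix (Fin m) (Fin m) (ZMod 2)) (I : Finset ℕ) (hIpos : ∀ x ∈ I, 1 ≤ x)
    (hIeven : ∀ x ∈ I, 2 ∣ x) (hm : 2 * m ∉ I) (k : ℕ) (hk : 2 * k ∉ I)
    (y : Fin (2 * m) → 𝒴) (u : ℕ → ZMod 2) :
    prefixProb W (permMatrix I (2 * m) * interKron A) (2 * k) y u =
      prefixProb W A k (fun t => y (evenIdx t))
          (fun t => u (swapPerm I (2 * t)) + u (swapPerm I (2 * t + 1))) *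
        prefixProb W A k (fun t => y (oddIdx t)) (fun t => u (swapPerm I (2 * t + 1))) := by
  unfold prefixProb
  rw [Finset.sum_mul_sum, ← Fintype.sum_prod_type']
  let σ := swapEquiv I hIpos hIeven m hm
  refine Fintype.sum_equiv ((Equiv.arrowCongr σ.symm (Equiv.refl _)).trans (splitEquiv m)) _ _ ?_
  intro x
  have hx : (Equiv.arrowCongr σ.symm (Equiv.refl (ZMod 2))) x = x ∘ σ := by
    funext j; simp [Equiv.arrowCongr]
  simp only [Equiv.trans_apply, hx]
  have hevent : (∀ j : Fin (2 * m), j.val < 2 * k → x j = u j.val) ↔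
      (∀ t : Fin m, t.val < k → (splitEquiv m (x ∘ σ)).1 t =
        u (swapPerm I (2 * t.val)) + u (swapPerm I (2 * t.val + 1))) ∧
      (∀ t : Fin m, t.val < k → (splitEquiv m (x ∘ σ)).2 t = u (swapPerm I (2 * t.val + 1))) := by
    constructor
    · intro h
      have hodd : ∀ t : Fin m, t.val < k → x (σ (oddIdx t)) = u (swapPerm I (2 * t.val + 1)) :=
        fun t ht => h (σ (oddIdx t)) (swapPerm_lt I k hk _ (by simp only [oddIdx]; omega))
      have heven : ∀ t : Fin m, t.val < k → x (σ (evenIdx t)) = u (swapPerm I (2 * t.val)) :=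
        fun t ht => h (σ (evenIdx t)) (swapPerm_lt I k hk _ (by simp only [evenIdx]; omega))
      refine ⟨fun t ht => ?_, fun t ht => hodd t ht⟩
      rw [← hodd t ht, ← heven t ht]
      rfl
    · rintro ⟨h1, h2⟩
      have hσ : ∀ j : Fin (2 * m), j.val < 2 * k → x (σ j) = u (swapPerm I j.val) := by
        intro j hj
        have hodd := h2 ⟨j.val / 2, by omega⟩ (by simp only; omega)
        have heven := h1 ⟨j.val / 2, by omega⟩ (by simp only; omega)
        simp only [splitEquiv, Equiv.coe_fn_mk, Function.comp] at hodd heven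
        rw [hodd] at heven
        have heven := add_right_cancel heven
        rcases Nat.mod_two_eq_zero_or_one j.val with hpar | hpar
        · have hj' : j = evenIdx ⟨j.val / 2, by omega⟩ := by
            ext; simp only [evenIdx]; omega
          rw [← hj'] at heven
          rw [heven]
          congr 2; omega
        · have hj' : j = oddIdx ⟨j.val / 2, by omega⟩ := by
            ext; simp only [oddIdx]; omega
          rw [← hj'] at hodd
          rw [hodd]
          congr 2; omega
      intro j hj
      have := hσ (σ j) (swapPerm_lt I k hk _ hj)
      have hσσ : σ (σ j) = j := by
        ext; exact swapPerm_swapPerm I hIpos hIeven j.val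
      rw [hσσ] at this
      rw [this]
      exact congrArg u (swapPerm_swapPerm I hIpos hIeven j.val)
  have hweight : (1 / 2 : ℝ) ^ (2 * m) *
      ∏ j, W (Matrix.vecMul x (permMatrix I (2 * m) * interKron A) j) (y j) =
      ((1 / 2 : ℝ) ^ m * ∏ t, W (Matrix.vecMul (splitEquiv m (x ∘ σ)).1 A t) (y (evenIdx t))) *
      ((1 / 2 : ℝ) ^ m * ∏ t, W (Matrix.vecMul (splitEquiv m (x ∘ σ)).2 A t) (y (oddIdx t))) := by
    rw [← Matrix.vecMul_vecMul, vecMul_permMatrix I hIpos hIeven m hm, prod_fin_two_mul,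
      Finset.prod_mul_distrib]
    simp only [vecMul_interKron_even, vecMul_interKron_odd]
    ring
  rw [hweight, ite_zero_mul_ite_zero]
  simp only [hevent]

/-- Lemma 2, '△' identity (`2i ∉ 𝓘` and `2(i+1) ∉ 𝓘`): `V_{2i+1}^{Gₙ} = (V_i^A)^△`,
covering Cases iii) and v) (paper's 1-based index `i`, `n = 2m ≥ 4`; the channels below
use 0-based indices, `û = u ∘ swapPerm 𝓘`, and `û_{2i−1} = u_{2i−2}` if `2(i−1) ∈ 𝓘`,
`û_{2i−1} = u_{2i−1}` otherwise). -/
theorem abs_adjChannel_triangle {𝒴 : Type*} [Fintype 𝒴]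
    (W : ZMod 2 → 𝒴 → ℝ) (hW0 : ∀ x y, 0 ≤ W x y) (hW1 : ∀ x, ∑ y, W x y = 1)
    (m : ℕ) (hm : 2 ≤ m) (A : Matrix (Fin m) (Fin m) (ZMod 2))
    (I : Finset ℕ)
    (hIrange : ∀ x ∈ I, 1 ≤ x ∧ x ≤ 2 * m - 1)
    (hIeven : ∀ x ∈ I, 2 ∣ x)
    (hIsep : ∀ x ∈ I, ∀ z ∈ I, x ≠ z → x + 4 ≤ z ∨ z + 4 ≤ x)
    (i : ℕ) (hi1 : 1 ≤ i) (hi2 : i ≤ m - 1)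
    (hmem : 2 * i ∉ I) (hmem' : 2 * (i + 1) ∉ I)
    (y : Fin (2 * m) → 𝒴) (u : ℕ → ZMod 2) :
    adjChannel W (permMatrix I (2 * m) * interKron A) (2 * i) y u
        (u (2 * i)) (u (2 * i + 1)) =
      (1 / 4 : ℝ) *
        adjChannel W A (i - 1) (fun j => y ⟨2 * j.val, by have := j.isLt; omega⟩)
            (fun t => u (swapPerm I (2 * t)) + u (swapPerm I (2 * t + 1)))
            ((if 2 * (i - 1) ∈ I then u (2 * i - 3) else u (2 * i - 2)) + u (2 * i - 1))
            (u (2 * i) + u (2 * i + 1)) *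
          adjChannel W A (i - 1) (fun j => y ⟨2 * j.val + 1, by have := j.isLt; omega⟩)
            (fun t => u (swapPerm I (2 * t + 1))) (u (2 * i - 1)) (u (2 * i + 1)) := by
  have hIpos : ∀ x ∈ I, 1 ≤ x := fun x hx => (hIrange x hx).1
  have hmI : 2 * m ∉ I := fun h => by have := (hIrange _ h).2; omega
  have hoddI : ∀ t, 2 * t + 1 ∉ I := fun t h => by have := hIeven _ h; omega
  obtain ⟨k, rfl⟩ : ∃ k, i = k + 1 := ⟨i - 1, by omega⟩
  have e1 : 2 * (k + 1) - 1 = 2 * k + 1 := by omega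
  have e2 : 2 * (k + 1) - 2 = 2 * k := by omega
  have e3 : 2 * (k + 1) - 3 = 2 * k - 1 := by omega
  simp only [Nat.add_sub_cancel, e1, e2, e3]
  -- The values of `swapPerm I` on the two blocks `{2k, 2k+1}` and `{2k+2, 2k+3}`.
  have s0 : u (swapPerm I (2 * k)) = if 2 * k ∈ I then u (2 * k - 1) else u (2 * k) := by
    unfold swapPerm
    rw [if_neg (hoddI k)]
    split_ifs <;> rfl
  have s1 : swapPerm I (2 * k + 1) = 2 * k + 1 := by
    unfold swapPerm
    rw [if_neg (by simpa [mul_add] using hmem), if_neg (hoddI k)]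
  have s2 : swapPerm I (2 * (k + 1)) = 2 * (k + 1) := by
    unfold swapPerm
    rw [if_neg (hoddI _), if_neg hmem]
  have s3 : swapPerm I (2 * (k + 1) + 1) = 2 * (k + 1) + 1 := by
    unfold swapPerm
    rw [if_neg (by simpa [mul_add] using hmem'), if_neg (hoddI _)]
  rw [adjChannel_eq_prefixProb W hW1 _ (2 * (k + 1)) (by omega) y u u _ _ (fun _ _ => rfl) rfl rfl,
    adjChannel_eq_prefixProb W hW1 A k (by omega) _ _
      (fun t => u (swapPerm I (2 * t)) + u (swapPerm I (2 * t + 1))) _ _ (fun _ _ => rfl)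
      (by simp only [s0, s1]) (by simp only [s2, s3]),
    adjChannel_eq_prefixProb W hW1 A k (by omega) _ _
      (fun t => u (swapPerm I (2 * t + 1))) _ _ (fun _ _ => rfl)
      (by simp only [s1]) (by simp only [s3])]
  have hsplit := prefixProb_split W A I hIpos hIeven hmI (k + 2) hmem' y u
  rw [show 2 * (k + 1) + 2 = 2 * (k + 2) by ring, hsplit]
  simp only [evenIdx, oddIdx]
  ring
end

section
/- Let ε ∈ [0,1] and define, for u₁, u₂ ∈ 𝔽₂ and y₁, y₂ ∈ Option 𝔽₂, V(y₁, y₂ | u₁, u₂) := BEC(ε)(y₁ | u₁+u₂)·BEC(ε)(y₂ | u₂). Define φ : (Option 𝔽₂)² → (Option 𝔽₂)³ by φ(some a, some c) = (some(a+c), some a, some c), φ(some a, none) = (none, some a, none), φ(none, some c) = (none, none, some c), φ(none, none) = (none, none, none). Then for all u₁, u₂ ∈ 𝔽₂ and every w ∈ (Option 𝔽₂)³: ∑_{(y₁,y₂) : φ(y₁,y₂) = w} V(y₁, y₂ | u₁, u₂) = DBEC((1−ε)², 0, (1−ε)ε, (1−ε)ε, ε²)(w | (u₁, u₂)). That is,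 for a binary erasure channel with erasure probability ε, the base adjacent-bits-channel V₁^{(2)} is the double-bits-erasure-channel DBEC((1−ε)², 0, (1−ε)ε, (1−ε)ε, ε²). -/
/-! The BEC with input `x` is a two-point distribution: weight `1 - ε` on `some x` and `ε` on
`none` (`sum_BEC_mul`). Averaging the indicator of `φ(y₁, y₂) = w` over the two independent outputs
therefore leaves four terms, one for each erasure pattern, and `φ` sends these patterns to the four
distinct outputs of the DBEC with weights `(1-ε)²`, `(1-ε)ε`, `ε(1-ε)`, `ε²`; the first uses
`(u₁ + u₂) + u₂ = u₁` in `𝔽₂`. -/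

/-- Output alphabet of a double-bits-erasure-channel. -/
abbrev OutTriple := Option (ZMod 2) × Option (ZMod 2) × Option (ZMod 2)

/-- The double-bits-erasure-channel `DBEC(p,q,r,s,t)`: on input `(u₁, u₂)` it outputs
`(some u₁, some (u₁+u₂), some u₂)` w.p. `p`, `(some u₁, none, none)` w.p. `q`,
`(none, some (u₁+u₂), none)` w.p. `r`, `(none, none, some u₂)` w.p. `s`, and
`(none, none, none)` w.p. `t`. -/
noncomputable def DBEC (p q r s t : ℝ) (u : ZMod 2 × ZMod 2) (w : OutTriple) : ℝ :=
  if w = (some u.1, some (u.1 + u.2), some u.2) then p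
  else if w = (some u.1, none, none) then q
  else if w = (none, some (u.1 + u.2), none) then r
  else if w = (none, none, some u.2) then s
  else if w = (none, none, none) then t
  else 0

/-- The binary erasure channel `BEC(ε)` (as transition probabilities `x ↦ y ↦ W(y|x)`). -/
noncomputable def BEC (ε : ℝ) : ZMod 2 → Option (ZMod 2) → ℝ := fun x y =>
  match y with
  | some z => if z = x then 1 - ε else 0
  | none => ε

/-- The sufficient statistic `φ` recombining the two BEC outputs. -/
def phiBEC : Option (ZMod 2) → Option (ZMod 2) → OutTriple
  | some a, some c => (some (a + c), some a, some c)
  | some a, none => (none, some a, none)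
  | none, some c => (none, none, some c)
  | none, none => (none, none, none)

/-- The expectation of `f` under the output distribution of `BEC(ε)` on input `x`. -/
theorem sum_BEC_mul (ε : ℝ) (x : ZMod 2) (f : Option (ZMod 2) → ℝ) :
    ∑ y, BEC ε x y * f y = (1 - ε) * f (some x) + ε * f none := by
  simp [Fintype.sum_option, BEC, add_comm]

/-- For a BEC with erasure probability `ε`, the base adjacent-bits-channel
`V₁⁽²⁾(y₁, y₂ | u₁, u₂) = BEC(ε)(y₁ | u₁+u₂)·BEC(ε)(y₂ | u₂)`, after applying `φ`,
is the double-bits-erasure-channel `DBEC((1−ε)², 0, (1−ε)ε, (1−ε)ε, ε²)`. -/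
theorem bec_base_adjacent_bits_channel (ε : ℝ) (hε0 : 0 ≤ ε) (hε1 : ε ≤ 1)
    (u₁ u₂ : ZMod 2) (w : OutTriple) :
    ∑ y : Option (ZMod 2) × Option (ZMod 2),
        (if phiBEC y.1 y.2 = w then BEC ε (u₁ + u₂) y.1 * BEC ε u₂ y.2 else 0) =
      DBEC ((1 - ε) ^ 2) 0 ((1 - ε) * ε) ((1 - ε) * ε) (ε ^ 2) (u₁, u₂) w := by
  have h : ∀ y₁ y₂ : Option (ZMod 2),
      (if phiBEC y₁ y₂ = w then BEC ε (u₁ + u₂) y₁ * BEC ε u₂ y₂ else 0) =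
        BEC ε (u₁ + u₂) y₁ * (BEC ε u₂ y₂ * if phiBEC y₁ y₂ = w then 1 else 0) := by
    intro y₁ y₂
    split_ifs <;> simp
  -- In characteristic two the first coordinate of `φ` recovers `u₁`.
  have hu : u₁ + u₂ + u₂ = u₁ := by
    rw [add_assoc, CharTwo.add_self_eq_zero, add_zero]
  rw [Fintype.sum_prod_type]
  simp only [h]
  simp only [← Finset.mul_sum, sum_BEC_mul, phiBEC, hu]
  -- The outputs tested by `DBEC` are pairwise distinct, so at most one term survives.
  unfold DBEC
  by_cases h₁ : w = (some u₁, some (u₁ + u₂), some u₂)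
  · subst h₁; simp; ring
  by_cases h₂ : w = (some u₁, none, none)
  · subst h₂; simp
  by_cases h₃ : w = (none, some (u₁ + u₂), none)
  · subst h₃; simp
  by_cases h₄ : w = (none, none, some u₂)
  · subst h₄; simp; ring
  by_cases h₅ : w = (none, none, none)
  · subst h₅; simp; ring
  simp [h₁, h₂, h₃, h₄, h₅, Ne.symm h₁, Ne.symm h₃, Ne.symm h₄, Ne.symm h₅]
end

section
/- (The '▽' DB polar transform of a DBEC.) Let p,q,r,s,t ≥ 0 with p+q+r+s+t = 1, let V := DBEC(p,q,r,s,t), and define V^▽((w₁,w₂) | (u₁,u₂)) := (1/4)·∑_{u₃,u₄ ∈ 𝔽₂} V(w₁ | (u₁+u₂, u₃+u₄))·V(w₂ | (u₂, u₄)) for w₁, w₂ ∈ (Option 𝔽₂)³. Define ψ : (Option 𝔽₂)³ × (Option 𝔽₂)³ → (Option 𝔽₂)³ by ψ((a₁,a₂,a₃),(b₁,b₂,b₃)) := (o₁, a₁, b₁), where o₁ := some(x+y) if a₁ = some x and b₁ = some y, and o₁ := none otherwise. Then for all u₁, u₂ ∈ 𝔽₂ and every w ∈ (Option 𝔽₂)³: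 ∑_{(w₁,w₂) : ψ(w₁,w₂) = w} V^▽((w₁,w₂) | (u₁,u₂)) = DBEC((p+q)², 0, (p+q)(r+s+t), (r+s+t)(p+q), (r+s+t)²)(w | (u₁,u₂)). -/
/-- Add two unerased symbols; erase if either is erased. -/
def optAdd : Option (ZMod 2) → Option (ZMod 2) → Option (ZMod 2)
  | some x, some y => some (x + y)
  | _, _ => none

/-- The sufficient statistic for the '▽' transform. -/
def psiNabla (w₁ w₂ : OutTriple) : OutTriple :=
  (optAdd w₁.1 w₂.1, w₁.1, w₂.1)

/-- The five possible outputs are pairwise distinct, so the nested conditionals in `DBEC` amount to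
a sum of point masses. -/
lemma DBEC_eq_sum_indicator (p q r s t : ℝ) (u : ZMod 2 × ZMod 2) (w : OutTriple) :
    DBEC p q r s t u w =
      (if (some u.1, some (u.1 + u.2), some u.2) = w then p else 0)
      + (if (some u.1, none, none) = w then q else 0)
      + (if (none, some (u.1 + u.2), none) = w then r else 0)
      + (if (none, none, some u.2) = w then s else 0)
      + (if (none, none, none) = w then t else 0) := by
  obtain ⟨a, b, c⟩ := w
  unfold DBEC
  cases a <;> cases b <;> cases c <;> simp [eq_comm]

/-- The expectation of a function of the first output coordinate. -/
lemma sum_DBEC_mul_fst (p q r s t : ℝ) (u : ZMod 2 × ZMod 2) (f : Option (ZMod 2) → ℝ) :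
    ∑ w : OutTriple, DBEC p q r s t u w * f w.1 =
      (p + q) * f (some u.1) + (r + s + t) * f none := by
  simp only [DBEC_eq_sum_indicator, add_mul, ite_mul, zero_mul, Finset.sum_add_distrib,
    Finset.sum_ite_eq, Finset.mem_univ, if_true]
  ring

/-- The joint version of `sum_DBEC_mul_fst` for two independent uses of the channel. -/
lemma sum_sum_DBEC_mul_fst (p q r s t : ℝ) (u v : ZMod 2 × ZMod 2)
    (f : Option (ZMod 2) → Option (ZMod 2) → ℝ) :
    ∑ w₁ : OutTriple, ∑ w₂ : OutTriple,
        DBEC p q r s t u w₁ * DBEC p q r s t v w₂ * f w₁.1 w₂.1 =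
      (p + q) * ((p + q) * f (some u.1) (some v.1) + (r + s + t) * f (some u.1) none)
      + (r + s + t) * ((p + q) * f none (some v.1) + (r + s + t) * f none none) := by
  simp only [mul_assoc, ← Finset.mul_sum, sum_DBEC_mul_fst p q r s t v]
  exact sum_DBEC_mul_fst p q r s t u
    (fun a => (p + q) * f a (some v.1) + (r + s + t) * f a none)

/-- The '▽' DB polar transform of `DBEC(p,q,r,s,t)` is
`DBEC((p+q)², 0, (p+q)(r+s+t), (r+s+t)(p+q), (r+s+t)²)`. -/
theorem dbec_nabla_transform (p q r s t : ℝ)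
    (hp : 0 ≤ p) (hq : 0 ≤ q) (hr : 0 ≤ r) (hs : 0 ≤ s) (ht : 0 ≤ t)
    (hsum : p + q + r + s + t = 1) (u₁ u₂ : ZMod 2) (w : OutTriple) :
    ∑ w₁ : OutTriple, ∑ w₂ : OutTriple,
        (if psiNabla w₁ w₂ = w then
          (1 / 4 : ℝ) * ∑ u₃ : ZMod 2, ∑ u₄ : ZMod 2,
            DBEC p q r s t (u₁ + u₂, u₃ + u₄) w₁ * DBEC p q r s t (u₂, u₄) w₂
        else 0) =
      DBEC ((p + q) ^ 2) 0 ((p + q) * (r + s + t)) ((r + s + t) * (p + q))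
        ((r + s + t) ^ 2) (u₁, u₂) w := by
  -- The indicator of the event `psiNabla w₁ w₂ = w`, as a function of the first coordinates.
  -- It is kept abstract so that `Decidable` instances do not carry the bound variables `u₃, u₄`.
  obtain ⟨f, hf⟩ : ∃ f : Option (ZMod 2) → Option (ZMod 2) → ℝ,
      ∀ a b, f a b = if (optAdd a b, a, b) = w then 1 else 0 := ⟨_, fun _ _ => rfl⟩
  have swap : ∑ w₁ : OutTriple, ∑ w₂ : OutTriple,
        (if psiNabla w₁ w₂ = w then
          (1 / 4 : ℝ) * ∑ u₃ : ZMod 2, ∑ u₄ : ZMod 2,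
            DBEC p q r s t (u₁ + u₂, u₃ + u₄) w₁ * DBEC p q r s t (u₂, u₄) w₂
        else 0) =
      (1 / 4 : ℝ) * ∑ u₃ : ZMod 2, ∑ u₄ : ZMod 2, ∑ w₁ : OutTriple, ∑ w₂ : OutTriple,
        DBEC p q r s t (u₁ + u₂, u₃ + u₄) w₁ * DBEC p q r s t (u₂, u₄) w₂ *
          f w₁.1 w₂.1 := by
    simp only [Finset.sum_comm (s := (Finset.univ : Finset (ZMod 2)))
      (t := (Finset.univ : Finset OutTriple)),
      Finset.mul_sum (s := (Finset.univ : Finset OutTriple))]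
    refine Finset.sum_congr rfl fun w₁ _ => Finset.sum_congr rfl fun w₂ _ => ?_
    simp only [psiNabla, ← Finset.sum_mul, hf]
    split_ifs <;> simp [*]
  have char_two : u₁ + u₂ + u₂ = u₁ := by rw [add_assoc, CharTwo.add_self_eq_zero, add_zero]
  rw [swap]
  -- The summand no longer depends on `u₃, u₄`, so the four terms cancel the factor `1 / 4`.
  simp only [sum_sum_DBEC_mul_fst, Finset.sum_const, Finset.card_univ, ZMod.card, nsmul_eq_mul]
  have h₁ : f (some (u₁ + u₂)) (some u₂) =
      if (some u₁, some (u₁ + u₂), some u₂) = w then 1 else 0 := by rw [hf, optAdd, char_two]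
  have h₂ : f (some (u₁ + u₂)) none = if (none, some (u₁ + u₂), none) = w then 1 else 0 := hf _ _
  have h₃ : f none (some u₂) = if (none, none, some u₂) = w then 1 else 0 := hf _ _
  have h₄ : f none none = if (none, none, none) = w then 1 else 0 := hf _ _
  rw [h₁, h₂, h₃, h₄, DBEC_eq_sum_indicator, ite_self]
  split_ifs <;> push_cast <;> ring
end

section
/- (The '△' DB polar transform of a DBEC.) Let p,q,r,s,t ≥ 0 with p+q+r+s+t = 1, let V := DBEC(p,q,r,s,t), and define V^△((c₁, c₂, w₁, w₂) | (u₃, u₄)) := (1/4)·V(w₁ | (c₁+c₂, u₃+u₄))·V(w₂ | (c₂, u₄)) for c₁, c₂ ∈ 𝔽₂ and w₁, w₂ ∈ (Option 𝔽₂)³. Define ψ(c₁, c₂, (a₁,a₂,a₃), (b₁,b₂,b₃)) := (o₁, o₂, o₃) ∈ (Option 𝔽₂)³ by: o₂ := a₃ if a₃ ≠ none, else some(z + c₁ + c₂) if a₂ = some z, else none; o₃ := b₃ if b₃ ≠ none, else some(z + c₂) if b₂ = some z, else none; and o₁ := some(x+y) if o₂ = some x and o₃ = some y, else none. Then for all u₃,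 u₄ ∈ 𝔽₂ and every w ∈ (Option 𝔽₂)³: ∑_{(c₁,c₂,w₁,w₂) : ψ(c₁,c₂,w₁,w₂) = w} V^△((c₁,c₂,w₁,w₂) | (u₃,u₄)) = DBEC((p+r+s)², 0, (p+r+s)(q+t), (q+t)(p+r+s), (q+t)²)(w | (u₃,u₄)). -/
/-- The sufficient statistic for the '△' transform: given the decoded bits `c₁, c₂` and the
two channel outputs, recover the available information about `(u₃, u₄)`. -/
def psiTriangle (c₁ c₂ : ZMod 2) (w₁ w₂ : OutTriple) : OutTriple :=
  let o₂ : Option (ZMod 2) :=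
    match w₁.2.2, w₁.2.1 with
    | some x, _ => some x
    | none, some z => some (z + c₁ + c₂)
    | none, none => none
  let o₃ : Option (ZMod 2) :=
    match w₂.2.2, w₂.2.1 with
    | some x, _ => some x
    | none, some z => some (z + c₂)
    | none, none => none
  (optAdd o₂ o₃, o₂, o₃)

/-- The five outputs of a DBEC are pairwise distinct, so the nested conditional in its definition
is a sum of weighted point masses. -/
lemma DBEC_eq_sum (p q r s t : ℝ) (u : ZMod 2 × ZMod 2) (w : OutTriple) :
    DBEC p q r s t u w =
      (if w = (some u.1, some (u.1 + u.2), some u.2) then p else 0)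
      + (if w = (some u.1, none, none) then q else 0)
      + (if w = (none, some (u.1 + u.2), none) then r else 0)
      + (if w = (none, none, some u.2) then s else 0)
      + (if w = (none, none, none) then t else 0) := by
  unfold DBEC
  split_ifs <;> simp_all

/-- The expectation of `f` under the output law of a DBEC. -/
lemma sum_DBEC_mul (p q r s t : ℝ) (u : ZMod 2 × ZMod 2) (f : OutTriple → ℝ) :
    ∑ w, DBEC p q r s t u w * f w =
      p * f (some u.1, some (u.1 + u.2), some u.2) + q * f (some u.1, none, none)
      + r * f (none, some (u.1 + u.2), none) + s * f (none, none, some u.2)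
      + t * f (none, none, none) := by
  simp only [DBEC_eq_sum, add_mul, Finset.sum_add_distrib, ite_mul, zero_mul,
    Finset.sum_ite_eq', Finset.mem_univ, if_true]

/-- The second input bit of a DBEC, as recovered from the output `w` when the first input bit is
known to be `c`; `none` if it is not determined. -/
def recoverBit (c : ZMod 2) (w : OutTriple) : Option (ZMod 2) :=
  match w.2.2, w.2.1 with
  | some x, _ => some x
  | none, some z => some (z + c)
  | none, none => none

lemma psiTriangle_eq (c₁ c₂ : ZMod 2) (w₁ w₂ : OutTriple) :
    psiTriangle c₁ c₂ w₁ w₂ =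
      (optAdd (recoverBit (c₁ + c₂) w₁) (recoverBit c₂ w₂),
        recoverBit (c₁ + c₂) w₁, recoverBit c₂ w₂) := by
  rcases w₁ with ⟨_, _ | _, _ | _⟩ <;> rcases w₂ with ⟨_, _ | _, _ | _⟩ <;>
    simp [psiTriangle, recoverBit, add_assoc]

/-- With the first input bit known, a DBEC acts on the second one as a binary erasure channel
with erasure probability `q + t`. -/
lemma sum_DBEC_mul_recoverBit (p q r s t : ℝ) (c u : ZMod 2) (g : Option (ZMod 2) → ℝ) :
    ∑ w, DBEC p q r s t (c, u) w * g (recoverBit c w) =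
      (p + r + s) * g (some u) + (q + t) * g none := by
  have h : c + u + c = u := by
    rw [add_right_comm, CharTwo.add_self_eq_zero, zero_add]
  rw [sum_DBEC_mul p q r s t (c, u) fun w => g (recoverBit c w)]
  simp only [recoverBit, h]
  ring

/-- The '△' DB polar transform of `DBEC(p,q,r,s,t)` is
`DBEC((p+r+s)², 0, (p+r+s)(q+t), (q+t)(p+r+s), (q+t)²)`. -/
theorem dbec_triangle_transform (p q r s t : ℝ)
    (hp : 0 ≤ p) (hq : 0 ≤ q) (hr : 0 ≤ r) (hs : 0 ≤ s) (ht : 0 ≤ t)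
    (hsum : p + q + r + s + t = 1) (u₃ u₄ : ZMod 2) (w : OutTriple) :
    ∑ c₁ : ZMod 2, ∑ c₂ : ZMod 2, ∑ w₁ : OutTriple, ∑ w₂ : OutTriple,
        (if psiTriangle c₁ c₂ w₁ w₂ = w then
          (1 / 4 : ℝ) * DBEC p q r s t (c₁ + c₂, u₃ + u₄) w₁ * DBEC p q r s t (c₂, u₄) w₂
        else 0) =
      DBEC ((p + r + s) ^ 2) 0 ((p + r + s) * (q + t)) ((q + t) * (p + r + s))
        ((q + t) ^ 2) (u₃, u₄) w := by
  -- For fixed `(c₁, c₂)` the two recovered bits are independent outputs of erasure channels.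
  have key : ∀ c₁ c₂ : ZMod 2,
      ∑ w₁ : OutTriple, ∑ w₂ : OutTriple,
        (if psiTriangle c₁ c₂ w₁ w₂ = w then
          (1 / 4 : ℝ) * DBEC p q r s t (c₁ + c₂, u₃ + u₄) w₁ * DBEC p q r s t (c₂, u₄) w₂
        else 0) =
      1 / 4 * DBEC ((p + r + s) ^ 2) 0 ((p + r + s) * (q + t)) ((q + t) * (p + r + s))
        ((q + t) ^ 2) (u₃, u₄) w := by
    intro c₁ c₂
    let G : Option (ZMod 2) → Option (ZMod 2) → ℝ :=
      fun a b => if (optAdd a b, a, b) = w then 1 else 0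
    calc
      _ = 1 / 4 * ∑ w₁ : OutTriple, DBEC p q r s t (c₁ + c₂, u₃ + u₄) w₁ *
            ∑ w₂ : OutTriple, DBEC p q r s t (c₂, u₄) w₂ *
              G (recoverBit (c₁ + c₂) w₁) (recoverBit c₂ w₂) := by
        simp only [Finset.mul_sum, psiTriangle_eq, G]
        refine Finset.sum_congr rfl fun w₁ _ => Finset.sum_congr rfl fun w₂ _ => ?_
        split_ifs <;> ring
      _ = 1 / 4 * ((p + r + s) * ((p + r + s) * G (some (u₃ + u₄)) (some u₄)
              + (q + t) * G (some (u₃ + u₄)) none)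
            + (q + t) * ((p + r + s) * G none (some u₄) + (q + t) * G none none)) := by
        congr 1
        rw [← sum_DBEC_mul_recoverBit p q r s t c₂ u₄, ← sum_DBEC_mul_recoverBit p q r s t c₂ u₄]
        rw [← sum_DBEC_mul_recoverBit p q r s t (c₁ + c₂) (u₃ + u₄)
          fun a => ∑ w₂, DBEC p q r s t (c₂, u₄) w₂ * G a (recoverBit c₂ w₂)]
      _ = _ := by
        have h : u₃ + u₄ + u₄ = u₃ := by
          rw [add_assoc, CharTwo.add_self_eq_zero, add_zero]
        rw [DBEC_eq_sum]
        simp only [G, optAdd, h, eq_comm (b := w), mul_ite, mul_one, mul_zero, ite_self]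
        congr 1
        split_ifs <;> ring
  simp only [key, Finset.sum_const, Finset.card_univ, ZMod.card, nsmul_eq_mul]
  push_cast
  ring
end

section
/- Let p,q,r,s,t ≥ 0 with p+q+r+s+t = 1, and let ((A,B), O) be a random pair with values in 𝔽₂² × (Option 𝔽₂)³ whose joint distribution is P((A,B) = (a,b), O = w) = (1/4)·DBEC(p,q,r,s,t)(w | (a,b)) (i.e., the input pair (A,B) is uniform on 𝔽₂² and O is the channel output). Then H(A | O) = (r+s+t)·log 2 and H(B | (A, O)) = (q+t)·log 2; that is, the first bit-channel of a DBEC(p,q,r,s,t) is an erasure channel with erasure probability r+s+t, and the second bit-channel is an erasure channel with erasure probability q+t. -/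
/-!
Conditional on an output `y`, the entropy of a bit depends only on the two joint masses
`a = P(X = 0, Y = y)` and `b = P(X = 1, Y = y)`, and contributes `pairEntropy a b` to `H(X | Y)`
(`condEntropy_bit`). This contribution is `0` when one mass vanishes (the output determines the
bit) and `2 a log 2` when the masses agree (the bit is erased). For a DBEC every output is of one
of these two kinds, both for `A` given `O` and for `B` given `(A, O)`, so evaluating the joint
masses at every output and adding up the erased mass gives `(r + s + t) log 2` and
`(q + t) log 2`.
-/

open scoped Classical

/-- Shannon entropy (natural log) of a finitely-valued random variable `X` under pmf `P`. -/
noncomputable def entropy {Ω α : Type*} [Fintype Ω] [Fintype α] (P : Ω → ℝ) (X : Ω → α) : ℝ :=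
  ∑ x : α, Real.negMulLog (prob P fun ω => X ω = x)

/-- Conditional entropy `H(X | Y) = ∑ y P(Y = y) · H(X | Y = y)`. -/
noncomputable def condEntropy {Ω α β : Type*} [Fintype Ω] [Fintype α] [Fintype β]
    (P : Ω → ℝ) (X : Ω → α) (Y : Ω → β) : ℝ :=
  ∑ y : β, prob P (fun ω => Y ω = y) *
    entropy (fun ω => if Y ω = y then P ω / prob P (fun ω' => Y ω' = y) else 0) X

/-- The contribution to `H(X | Y)` of a value of `Y` at which a bit `X` has joint masses
`a` and `b`. -/
noncomputable def pairEntropy (a b : ℝ) : ℝ :=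
  (a + b) * (Real.negMulLog (a / (a + b)) + Real.negMulLog (b / (a + b)))

lemma pairEntropy_zero_right (a : ℝ) : pairEntropy a 0 = 0 := by
  by_cases h : a = 0 <;> simp [pairEntropy, h]

lemma pairEntropy_zero_left (b : ℝ) : pairEntropy 0 b = 0 := by
  by_cases h : b = 0 <;> simp [pairEntropy, h]

lemma pairEntropy_self (a : ℝ) : pairEntropy a a = 2 * a * Real.log 2 := by
  by_cases h : a = 0
  · simp [pairEntropy, h]
  · have h2 : a / (a + a) = 2⁻¹ := by field_simp; norm_num
    simp only [pairEntropy, h2, Real.negMulLog, Real.log_inv]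
    ring

lemma sum_zmod_two (f : ZMod 2 → ℝ) : ∑ x, f x = f 0 + f 1 := Fin.sum_univ_two f

lemma condEntropy_bit {Ω β : Type*} [Fintype Ω] [Fintype β] (P : Ω → ℝ) (X : Ω → ZMod 2)
    (Y : Ω → β) :
    condEntropy P X Y = ∑ y, pairEntropy (prob P fun ω => X ω = 0 ∧ Y ω = y)
      (prob P fun ω => X ω = 1 ∧ Y ω = y) := by
  refine Finset.sum_congr rfl fun y _ => ?_
  have hcond : ∀ (Z : ℝ) (x : ZMod 2), prob (fun ω => if Y ω = y then P ω / Z else 0)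
      (fun ω => X ω = x) = prob P (fun ω => X ω = x ∧ Y ω = y) / Z := by
    intro Z x
    simp only [prob, Finset.sum_div, ite_and, ite_div, zero_div]
  have htotal : prob P (fun ω => Y ω = y) = prob P (fun ω => X ω = 0 ∧ Y ω = y)
      + prob P (fun ω => X ω = 1 ∧ Y ω = y) := by
    simp only [prob, ← Finset.sum_add_distrib]
    refine Finset.sum_congr rfl fun ω _ => ?_
    have hX : ∀ x : ZMod 2, x = 0 ∨ x = 1 := by decide
    rcases hX (X ω) with h | h <;> simp [h]
  rw [entropy, sum_zmod_two, hcond, hcond, htotal, pairEntropy]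

lemma prob_fst_output (p q r s t : ℝ) (a : ZMod 2) (w : OutTriple) :
    prob (fun ω : (ZMod 2 × ZMod 2) × OutTriple => (1 / 4 : ℝ) * DBEC p q r s t ω.1 ω.2)
      (fun ω => ω.1.1 = a ∧ ω.2 = w)
      = 1 / 4 * (DBEC p q r s t (a, 0) w + DBEC p q r s t (a, 1) w) := by
  simp only [prob, Fintype.sum_prod_type (α₁ := ZMod 2 × ZMod 2),
    Fintype.sum_prod_type (α₁ := ZMod 2) (α₂ := ZMod 2), ite_and]
  rw [Finset.sum_eq_single a (fun x _ hx => by simp [hx]) (by simp)]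
  simp only [if_true, Finset.sum_ite_eq', Finset.mem_univ, sum_zmod_two]
  ring

lemma prob_snd_fst_output (p q r s t : ℝ) (b : ZMod 2) (z : ZMod 2 × OutTriple) :
    prob (fun ω : (ZMod 2 × ZMod 2) × OutTriple => (1 / 4 : ℝ) * DBEC p q r s t ω.1 ω.2)
      (fun ω => ω.1.2 = b ∧ (ω.1.1, ω.2) = z)
      = 1 / 4 * DBEC p q r s t (z.1, b) z.2 := by
  rw [prob, Finset.sum_eq_single ((z.1, b), z.2)]
  · simp
  · rintro ⟨⟨a, b'⟩, w⟩ _ hne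
    rw [if_neg]
    rintro ⟨rfl, rfl⟩
    exact hne rfl
  · simp

/-- For a uniform input pair `(A, B)` through `DBEC(p,q,r,s,t)` with output `O`:
the first bit-channel satisfies `H(A | O) = (r+s+t)·log 2` and the second bit-channel
satisfies `H(B | A, O) = (q+t)·log 2`, i.e. they are erasure channels with erasure
probabilities `r+s+t` and `q+t` respectively. -/
theorem dbec_bit_channels_are_erasure (p q r s t : ℝ)
    (hp : 0 ≤ p) (hq : 0 ≤ q) (hr : 0 ≤ r) (hs : 0 ≤ s) (ht : 0 ≤ t)
    (hsum : p + q + r + s + t = 1) :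
    condEntropy (fun ω : (ZMod 2 × ZMod 2) × OutTriple => (1 / 4 : ℝ) * DBEC p q r s t ω.1 ω.2)
          (fun ω => ω.1.1) (fun ω => ω.2) =
        (r + s + t) * Real.log 2 ∧
      condEntropy (fun ω : (ZMod 2 × ZMod 2) × OutTriple => (1 / 4 : ℝ) * DBEC p q r s t ω.1 ω.2)
          (fun ω => ω.1.2) (fun ω => (ω.1.1, ω.2)) =
        (q + t) * Real.log 2 := by
  have h11 : (1 : ZMod 2) + 1 = 0 := by decide
  refine ⟨?_, ?_⟩
  · simp only [condEntropy_bit, prob_fst_output]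
    simp only [Fintype.sum_prod_type, Fintype.sum_option, sum_zmod_two]
    simp [DBEC, h11, pairEntropy_zero_left, pairEntropy_zero_right]
    simp only [pairEntropy_self]
    ring
  · simp only [condEntropy_bit, prob_snd_fst_output]
    simp only [Fintype.sum_prod_type, Fintype.sum_option, sum_zmod_two]
    simp [DBEC, h11, pairEntropy_zero_left, pairEntropy_zero_right, pairEntropy_self]
    ring
end
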